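/- For p, q ∈ {1, …, n}, let η_{pq} denote the derivation η_{pq} := Σ_{m=0}^{n} (x_p^m·∂/∂x_q^m − x_q^m·∂/∂x_p^m) on the polynomial ring in the variables x_i^j. Then for all 1 ≤ i, j, k ≤ n, one has η_{pq}(X_{i,jk}) = δ_{qj}·X_{i,pk} + δ_{qk}·X_{i,pj} − δ_{pi}·X_{q,jk} − δ_{pj}·X_{i,qk} − δ_{pk}·X_{i,qj} + δ_{qi}·X_{p,jk}, where δ is the Kronecker delta. -/

import Mathlib

/-- The `(n+1) × (n+1)` matrix whose `j`-th column is `(x_1^j, …, x_n^j, 1)`,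
with entries in the polynomial ring in the variables `x_i^j`
(a variable is a pair `(i, j) : Fin n × Fin (n+1)`, `i` the coordinate index, `j` the vertex index). -/
noncomputable def Vmat (n : ℕ) : Matrix (Fin (n+1)) (Fin (n+1)) (MvPolynomial (Fin n × Fin (n+1)) ℝ) :=
  Matrix.of fun r c => if h : (r : ℕ) < n then MvPolynomial.X (⟨r, h⟩, c) else 1

/-- The basic determinant `V`. -/
noncomputable def Vpoly (n : ℕ) : MvPolynomial (Fin n × Fin (n+1)) ℝ := (Vmat n).det

/-- The matrix of `V` with its `i`-th row replaced by `(x_j^0 x_k^0, …, x_j^n x_k^n)`. -/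
noncomputable def Xmat (n : ℕ) (i j k : Fin n) :
    Matrix (Fin (n+1)) (Fin (n+1)) (MvPolynomial (Fin n × Fin (n+1)) ℝ) :=
  Matrix.of fun r c =>
    if (r : ℕ) = (i : ℕ) then MvPolynomial.X (j, c) * MvPolynomial.X (k, c)
    else if h : (r : ℕ) < n then MvPolynomial.X (⟨r, h⟩, c) else 1

/-- The basic determinant `X_{i,jk}`. -/
noncomputable def Xpoly (n : ℕ) (i j k : Fin n) : MvPolynomial (Fin n × Fin (n+1)) ℝ :=
  (Xmat n i j k).det


/-- The Kronecker delta. -/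
def kron {n : ℕ} (a b : Fin n) : ℝ := if a = b then 1 else 0

/-! Write `η_{pq} = E_{pq} - E_{qp}` with the polarization operator `E_{pq} = Σ_m x_p^m ∂/∂x_q^m`,
the derivation that turns the row `x_q` of `V` into the row `x_p` and kills the other rows.
In the row-by-row expansion of `E_{pq} X_{i,jk}`, the replaced row contributes
`δ_{qj} X_{i,pk} + δ_{qk} X_{i,pj}`; the row `x_q`, when it is not the replaced one, becomes `x_p`,
which gives a matrix with two equal rows unless `p = q` or `p = i`, and in the latter case gives
`-X_{q,jk}` by a row swap. The terms `δ_{pq} X_{i,jk}` cancel in the antisymmetrization.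
-/

section DerivationDet

variable {R A M ι : Type*} [CommSemiring R]

theorem derivation_prod [CommSemiring A] [Algebra R A] [AddCommMonoid M] [Module A M] [Module R M]
    [DecidableEq ι] (D : Derivation R A M) (s : Finset ι) (f : ι → A) :
    D (∏ a ∈ s, f a) = ∑ b ∈ s, (∏ a ∈ s.erase b, f a) • D (f b) := by
  induction s using Finset.induction_on with
  | empty => simp
  | insert x s hx ih =>
    rw [Finset.prod_insert hx, D.leibniz, ih, Finset.sum_insert hx, Finset.erase_insert hx,
      add_comm, Finset.smul_sum]
    congr 1
    refine Finset.sum_congr rfl fun b hb => ?_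
    have hxb : x ≠ b := fun h => hx (h ▸ hb)
    rw [Finset.erase_insert_of_ne hxb, Finset.prod_insert fun h => hx (Finset.mem_of_mem_erase h),
      mul_smul]

variable [CommRing A] [Algebra R A] [Fintype ι] [DecidableEq ι]

theorem derivation_det (D : Derivation R A A) (B : Matrix ι ι A) :
    D B.det = ∑ r, (B.updateRow r (D ∘ B r)).det := by
  have derivation_term (τ : Equiv.Perm ι) :
      D (∏ c, B (τ c) c) = ∑ r, ∏ c, B.updateRow r (D ∘ B r) (τ c) c := by
    rw [derivation_prod, ← Equiv.sum_comp τ fun r => ∏ c, B.updateRow r (D ∘ B r) (τ c) c]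
    refine Finset.sum_congr rfl fun b _ => ?_
    rw [← Finset.prod_erase_mul _ _ (Finset.mem_univ b), Matrix.updateRow_self, smul_eq_mul,
      Function.comp_apply]
    congr 1
    refine Finset.prod_congr rfl fun c hc => ?_
    rw [Matrix.updateRow_ne (τ.injective.ne (Finset.ne_of_mem_erase hc))]
  simp only [Matrix.det_apply, Units.smul_def, map_sum, map_zsmul, derivation_term,
    Finset.smul_sum]
  exact Finset.sum_comm

theorem det_updateRow_algebra_smul (B : Matrix ι ι A) (r : ι) (a : R) (u : ι → A) :
    (B.updateRow r (a • u)).det = a • (B.updateRow r u).det := by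
  rw [← algebraMap_smul A a u, Matrix.det_updateRow_smul, Algebra.smul_def]

theorem det_updateRow_updateRow_swap (B : Matrix ι ι A) {i r : ι} (hri : r ≠ i) (v : ι → A) :
    ((B.updateRow i v).updateRow r (B i)).det = -(B.updateRow r v).det := by
  have rows_swapped : (B.updateRow i v).updateRow r (B i) =
      (B.updateRow r v).submatrix (Equiv.swap r i) id := by
    ext a c
    rcases eq_or_ne a r with rfl | har
    · simp [hri.symm]
    rcases eq_or_ne a i with rfl | hai
    · simp [har]
    · simp [Equiv.swap_apply_of_ne_of_ne har hai, har, hai]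
  rw [rows_swapped, Matrix.det_permute, Equiv.Perm.sign_swap hri, Units.val_neg, Units.val_one,
    Int.cast_neg, Int.cast_one, neg_one_mul]

theorem det_updateRow_updateRow (B : Matrix ι ι A) {i r : ι} (hri : r ≠ i) (v : ι → A) (s : ι) :
    ((B.updateRow i v).updateRow r (B s)).det =
      (if s = r then (B.updateRow i v).det else 0) -
        (if s = i then (B.updateRow r v).det else 0) := by
  by_cases hsi : s = i
  · subst hsi
    rw [det_updateRow_updateRow_swap B hri, if_neg hri.symm, if_pos rfl, zero_sub]
  rw [← Matrix.updateRow_ne (M := B) (b := v) hsi, if_neg hsi, sub_zero]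
  split_ifs with hsr
  · rw [hsr, Matrix.updateRow_eq_self]
  · exact Matrix.det_updateRow_eq_zero hsr

theorem derivation_det_updateRow (D : Derivation R A A) (B : Matrix ι ι A) {p q : ι}
    (hD : ∀ r, D ∘ B r = if r = q then B p else 0) (i : ι) (v : ι → A) :
    D (B.updateRow i v).det =
      (B.updateRow i (D ∘ v)).det + (if p = q then (B.updateRow i v).det else 0) -
        (if p = i then (B.updateRow q v).det else 0) := by
  have replaced_row : ((B.updateRow i v).updateRow i (D ∘ B.updateRow i v i)).det =
      (B.updateRow i (D ∘ v)).det := by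
    rw [Matrix.updateRow_self, Matrix.updateRow_idem]
  have other_row (r : ι) (hri : r ≠ i) :
      ((B.updateRow i v).updateRow r (D ∘ B.updateRow i v r)).det =
        if r = q then ((if p = q then (B.updateRow i v).det else 0) -
          if p = i then (B.updateRow q v).det else 0) else 0 := by
    rw [Matrix.updateRow_ne hri, hD]
    by_cases hrq : r = q
    · rw [if_pos hrq, if_pos hrq, det_updateRow_updateRow B hri, hrq]
    · rw [if_neg hrq, if_neg hrq]
      exact Matrix.det_eq_zero_of_row_eq_zero r fun c => by
        rw [Matrix.updateRow_self, Pi.zero_apply]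
  rw [derivation_det, ← Finset.add_sum_erase _ _ (Finset.mem_univ i), replaced_row,
    Finset.sum_congr rfl fun r hr => other_row r (Finset.ne_of_mem_erase hr), Finset.sum_ite_eq',
    add_sub_assoc]
  -- No row `r ≠ i` contributes when `q = i`, but then the two correction terms cancel.
  by_cases hqi : q = i <;> simp [hqi]

end DerivationDet

section Polarization

open MvPolynomial

variable {R σ ι : Type*} [CommSemiring R] [Fintype ι]

/-- The polarization operator `E_{pq} = Σ_m x_p^m ∂/∂x_q^m` on polynomials in the coordinates of
`ι`-many points, where the variable `(a, m)` is the coordinate `x_a^m` of the point `m`. -/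
noncomputable def polarization (p q : σ) :
    Derivation R (MvPolynomial (σ × ι) R) (MvPolynomial (σ × ι) R) :=
  ∑ m, (X (p, m) : MvPolynomial (σ × ι) R) • pderiv (q, m)

theorem polarization_apply (p q : σ) (f : MvPolynomial (σ × ι) R) :
    polarization p q f = ∑ m, X (p, m) * pderiv (q, m) f := by
  rw [polarization, ← Derivation.coeFnAddMonoidHom_apply, map_sum, Finset.sum_apply]
  rfl

theorem polarization_X [DecidableEq σ] (p q a : σ) (c : ι) :
    polarization p q (X (a, c) : MvPolynomial (σ × ι) R) = if q = a then X (p, c) else 0 := by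
  classical
  rw [polarization_apply, Finset.sum_eq_single c]
  · simp [pderiv_X, Pi.single_apply, eq_comm]
  · intro m _ hm
    simp [pderiv_X, hm.symm]
  · simp

end Polarization

section BasicDeterminants

open MvPolynomial

variable {n : ℕ}

theorem kron_comm (a b : Fin n) : kron a b = kron b a := by
  simp only [kron, eq_comm]

theorem kron_smul {M : Type*} [AddCommMonoid M] [Module ℝ M] (a b : Fin n) (x : M) :
    kron a b • x = if a = b then x else 0 := by
  rw [kron, ite_smul, one_smul, zero_smul]

theorem Vmat_castSucc (r : Fin n) : Vmat n r.castSucc = fun c => X (r, c) := by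
  funext c
  simp [Vmat]

theorem Vmat_last : Vmat n (Fin.last n) = 1 := by
  funext c
  simp [Vmat]

theorem Xmat_eq_updateRow (i j k : Fin n) :
    Xmat n i j k = (Vmat n).updateRow i.castSucc fun c => X (j, c) * X (k, c) := by
  ext1 r c
  simp only [Xmat, Vmat, Matrix.updateRow_apply, Matrix.of_apply, Fin.ext_iff, Fin.val_castSucc]

theorem polarization_comp_Vmat (p q : Fin n) (r : Fin (n + 1)) :
    polarization p q ∘ Vmat n r = if r = q.castSucc then Vmat n p.castSucc else 0 := by
  funext c
  induction r using Fin.lastCases with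
  | last => simp [Vmat_last, (Fin.castSucc_ne_last q).symm]
  | cast a =>
    simp only [Vmat_castSucc, Function.comp_apply, polarization_X, Fin.castSucc_inj,
      eq_comm (a := a)]
    split_ifs <;> rfl

theorem polarization_comp_X_mul_X (p q j k : Fin n) :
    (polarization p q ∘ fun c : Fin (n + 1) => (X (j, c) * X (k, c) : MvPolynomial _ ℝ)) =
      kron q j • (fun c => X (p, c) * X (k, c)) + kron q k • fun c => X (p, c) * X (j, c) := by
  funext c
  simp only [Function.comp_apply, Derivation.leibniz, polarization_X, kron_smul, Pi.add_apply,
    smul_eq_mul]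
  split_ifs <;> simp [mul_comm, add_comm]

theorem polarization_Xpoly (p q i j k : Fin n) :
    polarization p q (Xpoly n i j k) =
      kron q j • Xpoly n i p k + kron q k • Xpoly n i p j + kron p q • Xpoly n i j k
        - kron p i • Xpoly n q j k := by
  simp only [Xpoly, Xmat_eq_updateRow]
  rw [derivation_det_updateRow _ _ (polarization_comp_Vmat p q), polarization_comp_X_mul_X,
    Matrix.det_updateRow_add, det_updateRow_algebra_smul, det_updateRow_algebra_smul,
    kron_smul p q, kron_smul p i]
  simp only [Fin.castSucc_inj]

end BasicDeterminants

/-- The infinitesimal rotation `η_{pq} = Σ_m (x_p^m ∂/∂x_q^m − x_q^m ∂/∂x_p^m)` acts on the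
basic determinants by `η_{pq}(X_{i,jk}) = δ_{qj} X_{i,pk} + δ_{qk} X_{i,pj} − δ_{pi} X_{q,jk}
− δ_{pj} X_{i,qk} − δ_{pk} X_{i,qj} + δ_{qi} X_{p,jk}`. -/
theorem eta_Xpoly (n : ℕ) (hn : 1 ≤ n) (p q i j k : Fin n) :
    ∑ m : Fin (n+1),
        (MvPolynomial.X (p, m) * MvPolynomial.pderiv (q, m) (Xpoly n i j k)
          - MvPolynomial.X (q, m) * MvPolynomial.pderiv (p, m) (Xpoly n i j k)) =
      kron q j • Xpoly n i p k + kron q k • Xpoly n i p j - kron p i • Xpoly n q j k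
        - kron p j • Xpoly n i q k - kron p k • Xpoly n i q j + kron q i • Xpoly n p j k := by
  simp only [Finset.sum_sub_distrib, ← polarization_apply, polarization_Xpoly, kron_comm q p]
  abel
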